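/- arXiv:2407.05114 — 2 statements merged into one kernel-verified Lean document; each statement's English description precedes it below -/
import Mathlib

section
/- Let P be a c-packed polygonal curve in ℝ^d all of whose edges have length at least ℓ > 0. Then for every point q ∈ ℝ^d and every R > 0, the number of edges of P that intersect the closed ball B(q,R) is at most c·(R+ℓ)/ℓ. -/
open scoped BigOperators

noncomputable section

/-- Points of `d`-dimensional Euclidean space. -/
abbrev Pt (d : ℕ) := EuclideanSpace ℝ (Fin d)

/-- A reparametrization: a continuous nondecreasing surjection of `[0,1]` onto itself
(equivalently, continuous and monotone on `[0,1]` with `α 0 = 0` and `α 1 = 1`). -/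
structure IsReparam (α : ℝ → ℝ) : Prop where
  continuousOn : ContinuousOn α (Set.Icc 0 1)
  monotoneOn : MonotoneOn α (Set.Icc 0 1)
  map_zero : α 0 = 0
  map_one : α 1 = 1

/-- The Fréchet distance between two curves parametrized over `[0,1]`. -/
noncomputable def frechetDist {d : ℕ} (P Q : ℝ → Pt d) : ℝ :=
  sInf {r : ℝ | ∃ α β : ℝ → ℝ, IsReparam α ∧ IsReparam β ∧
    r = ⨆ t : Set.Icc (0:ℝ) 1, dist (P (α (t : ℝ))) (Q (β (t : ℝ)))}

/-- The straight-line curve from `a` to `b`, parametrized over `[0,1]`. -/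
def seg {d : ℕ} (a b : Pt d) : ℝ → Pt d := fun t => (1 - t) • a + t • b

/-- The subcurve `K|[s,t]`, reparametrized over `[0,1]`. -/
def subcurve {d : ℕ} (K : ℝ → Pt d) (s t : ℝ) : ℝ → Pt d := fun u => K (s + u * (t - s))

/-- `K` is affine-linear on `[a,b]` (constant if `a = b`, by `div_zero`). -/
def AffineOn {d : ℕ} (K : ℝ → Pt d) (a b : ℝ) : Prop :=
  ∀ x ∈ Set.Icc a b, K x = K a + ((x - a) / (b - a)) • (K b - K a)

/-- Concatenation of two curves parametrized over `[0,1]`. -/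
noncomputable def concat {d : ℕ} (A B : ℝ → Pt d) : ℝ → Pt d :=
  fun t => if t ≤ 1 / 2 then A (2 * t) else B (2 * t - 1)

/-- The point at parameter `t ∈ [0,1]` on the segment with endpoints `e.1`, `e.2`. -/
def interpEdge {d : ℕ} (e : Pt d × Pt d) (t : ℝ) : Pt d := (1 - t) • e.1 + t • e.2

/-- The edges of a polygonal curve given by its list of vertices. -/
def edgesOf {d : ℕ} (l : List (Pt d)) : List (Pt d × Pt d) := l.zip l.tail

/-- The length of the part of segment `e` inside the closed ball `B(q,r)`. -/
noncomputable def segBallLength {d : ℕ} (e : Pt d × Pt d) (q : Pt d) (r : ℝ) : ℝ :=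
  (MeasureTheory.volume
      {t : ℝ | t ∈ Set.Icc (0:ℝ) 1 ∧ interpEdge e t ∈ Metric.closedBall q r}).toReal
    * dist e.1 e.2

/-- A polygonal curve with vertex list `l` is `c`-packed: for every point `q` and radius
`r > 0`, the total length of the curve inside `B(q,r)` is at most `c * r`. -/
def CPacked {d : ℕ} (c : ℝ) (l : List (Pt d)) : Prop :=
  ∀ (q : Pt d) (r : ℝ), 0 < r →
    ((edgesOf l).map (fun e => segBallLength e q r)).sum ≤ c * r

/-- Greedy scan step of the simplification: starting from the current vertex `cur`, mark
the first vertex at distance at least `μ` from `cur` and continue from it. -/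
noncomputable def greedyScan {d : ℕ} (μ : ℝ) : Pt d → List (Pt d) → List (Pt d)
  | _, [] => []
  | cur, p :: rest =>
      if μ ≤ dist cur p then p :: greedyScan μ p rest else greedyScan μ cur rest

open Classical in
/-- The greedy `μ`-simplification of a polygonal curve given by its vertex list: mark the
first vertex, greedily scan forward, and always mark the last vertex. -/
noncomputable def simplList {d : ℕ} (μ : ℝ) : List (Pt d) → List (Pt d)
  | [] => []
  | p :: rest =>
      let s := p :: greedyScan μ p rest
      match rest.getLast? with
      | none => s
      | some last => if s.getLast? = some last then s else s ++ [last]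

/-- `P : [0,1] → ℝ^d` is the polygonal curve through the vertex list `l`, with the uniform
parametrization placing vertex `i` at parameter `i / (|l| - 1)`. -/
def IsPolygonalParamL {d : ℕ} (l : List (Pt d)) (P : ℝ → Pt d) : Prop :=
  (∀ i, i < l.length → P ((i : ℝ) / ((l.length : ℝ) - 1)) = l.getD i 0) ∧
  ∀ i, i + 1 < l.length →
    AffineOn P ((i : ℝ) / ((l.length : ℝ) - 1)) (((i : ℝ) + 1) / ((l.length : ℝ) - 1))

/-- `Q : [0,1] → ℝ^d` is the polygonal curve with vertices `q 0, …, q (m-1)`, with the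
uniform parametrization placing vertex `i` at parameter `i / (m - 1)`. -/
def IsPolygonalParam {d : ℕ} (m : ℕ) (q : ℕ → Pt d) (Q : ℝ → Pt d) : Prop :=
  (∀ i, i < m → Q ((i : ℝ) / ((m : ℝ) - 1)) = q i) ∧
  ∀ i, i + 1 < m →
    AffineOn Q ((i : ℝ) / ((m : ℝ) - 1)) (((i : ℝ) + 1) / ((m : ℝ) - 1))

/-- The Euclidean distance from a point `x` to the segment `e`. -/
noncomputable def segDist {d : ℕ} (e : Pt d × Pt d) (x : Pt d) : ℝ :=
  sInf {r : ℝ | ∃ t ∈ Set.Icc (0:ℝ) 1, r = dist x (interpEdge e t)}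

/-- The trough object of an edge `e`, a subset of `ℝ^d × ℝ`. -/
def trough {d : ℕ} (e : Pt d × Pt d) (δ : ℝ) : Set (Pt d × ℝ) :=
  {p | segDist e p.1 ≤ 4 * p.2 ∧ 4 * p.2 ≤ 8 * δ⁻¹ * dist e.1 e.2}

/-- The axis-parallel hypercube in `ℝ^d × ℝ` with lower corner `(a, b)` and side length `s`. -/
def cube {d : ℕ} (a : Pt d) (b s : ℝ) : Set (Pt d × ℝ) :=
  {p | (∀ i, p.1 i ∈ Set.Icc (a i) (a i + s)) ∧ p.2 ∈ Set.Icc b (b + s)}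

end

/-! A segment of length at least `ℓ` that meets `B(q, R)` contributes length at least `ℓ` to the
enlarged ball `B(q, R + ℓ)`: starting at the meeting point, a portion of length `ℓ` stays within
distance `ℓ` of it. Packedness bounds the total of these contributions by `c * (R + ℓ)`. -/

section Segment

open MeasureTheory Metric Set AffineMap

theorem le_volume_real_Icc_inter_closedBall {a b x δ : ℝ} (hx : x ∈ Icc a b) (hδ : δ ≤ b - a) :
    δ ≤ volume.real (Icc a b ∩ closedBall x δ) := by
  rw [Real.closedBall_eq_Icc, Icc_inter_Icc, Real.volume_real_Icc]
  grind

variable {V X : Type*} [SeminormedAddCommGroup V] [NormedSpace ℝ V] [PseudoMetricSpace X]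
  [NormedAddTorsor V X] {q : X} {R ℓ : ℝ}

theorem mapsTo_lineMap_closedBall {a b : X} {t : ℝ} (ht : lineMap a b t ∈ closedBall q R) (δ : ℝ) :
    MapsTo (lineMap a b) (closedBall t δ) (closedBall q (R + dist a b * δ)) :=
  ((lipschitzWith_lineMap a b).mapsTo_closedBall t δ).mono_right <|
    closedBall_subset_closedBall' <| by
      rw [coe_nndist, add_comm]
      gcongr
      exact ht

/-- The length of the part of the segment `e` inside the closed ball `B(q, r)`: the
counterpart of `segBallLength` in an arbitrary real normed affine space. -/
noncomputable def segmentBallLength (e : X × X) (q : X) (r : ℝ) : ℝ :=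
  volume.real (Icc (0 : ℝ) 1 ∩ lineMap e.1 e.2 ⁻¹' closedBall q r) * dist e.1 e.2

theorem segmentBallLength_nonneg (e : X × X) (q : X) (r : ℝ) : 0 ≤ segmentBallLength e q r :=
  mul_nonneg measureReal_nonneg dist_nonneg

theorem le_segmentBallLength {e : X × X} (hℓ : 0 < ℓ) (he : ℓ ≤ dist e.1 e.2)
    (hmeet : ∃ t ∈ Icc (0 : ℝ) 1, lineMap e.1 e.2 t ∈ closedBall q R) :
    ℓ ≤ segmentBallLength e q (R + ℓ) := by
  obtain ⟨t, ht, hq⟩ := hmeet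
  have hdist : 0 < dist e.1 e.2 := hℓ.trans_le he
  obtain ⟨δ, hδ⟩ : ∃ δ, dist e.1 e.2 * δ = ℓ := ⟨_, mul_div_cancel₀ ℓ hdist.ne'⟩
  have hδ_le : δ ≤ 1 - 0 := by nlinarith
  have hmaps := mapsTo_lineMap_closedBall hq δ
  rw [hδ] at hmaps
  calc ℓ = δ * dist e.1 e.2 := by rw [mul_comm, hδ]
    _ ≤ volume.real (Icc 0 1 ∩ closedBall t δ) * dist e.1 e.2 := by
        gcongr
        exact le_volume_real_Icc_inter_closedBall ht hδ_le
    _ ≤ segmentBallLength e q (R + ℓ) := by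
        unfold segmentBallLength
        gcongr
        · exact measure_inter_lt_top_of_left_ne_top measure_Icc_lt_top.ne |>.ne
        · exact hmaps

open Classical in
theorem packed_edge_count_general {ι : Type*} {c : ℝ} (hℓ : 0 < ℓ) {s : Finset ι} {e : ι → X × X}
    (hedges : ∀ i ∈ s, ℓ ≤ dist (e i).1 (e i).2)
    (hpack : ∑ i ∈ s, segmentBallLength (e i) q (R + ℓ) ≤ c * (R + ℓ)) :
    ((s.filter fun i ↦
        ∃ t ∈ Icc (0 : ℝ) 1, lineMap (e i).1 (e i).2 t ∈ closedBall q R).card : ℝ)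
      ≤ c * (R + ℓ) / ℓ := by
  rw [le_div_iff₀ hℓ, ← nsmul_eq_mul]
  calc _ ≤ ∑ i ∈ s with ∃ t ∈ Icc (0 : ℝ) 1, lineMap (e i).1 (e i).2 t ∈ closedBall q R,
        segmentBallLength (e i) q (R + ℓ) :=
        Finset.card_nsmul_le_sum _ _ _ fun i hi ↦
          have ⟨his, hmeet⟩ := Finset.mem_filter.1 hi
          le_segmentBallLength hℓ (hedges i his) hmeet
    _ ≤ ∑ i ∈ s, segmentBallLength (e i) q (R + ℓ) :=
        Finset.sum_le_sum_of_subset_of_nonneg (Finset.filter_subset _ _)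
          fun _ _ _ ↦ segmentBallLength_nonneg _ _ _
    _ ≤ c * (R + ℓ) := hpack

end Segment

theorem sum_range_getD {α M : Type*} [AddCommMonoid M] (L : List α) (x : α) (f : α → M) :
    ∑ i ∈ Finset.range L.length, f (L.getD i x) = (L.map f).sum := by
  simp [Finset.sum_range]

theorem getD_mem_of_mem_range {α : Type*} {L : List α} {i : ℕ} (hi : i ∈ Finset.range L.length)
    (x : α) : L.getD i x ∈ L := by
  rw [List.getD_eq_getElem _ _ (Finset.mem_range.1 hi)]
  exact List.getElem_mem _

theorem interpEdge_eq_lineMap {d : ℕ} (e : Pt d × Pt d) :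
    interpEdge e = AffineMap.lineMap (k := ℝ) e.1 e.2 :=
  funext fun t ↦ (AffineMap.lineMap_apply_module e.1 e.2 t).symm

theorem segBallLength_eq_segmentBallLength {d : ℕ} (e : Pt d × Pt d) (q : Pt d) (r : ℝ) :
    segBallLength e q r = segmentBallLength e q r := by
  rw [segBallLength, interpEdge_eq_lineMap]
  rfl

open Classical in
/-- Let `P` be a `c`-packed polygonal curve in `ℝ^d` all of whose edges have
length at least `ℓ > 0`. Then for every point `q` and every `R > 0`, the number of edges of
`P` intersecting the closed ball `B(q,R)` is at most `c (R + ℓ) / ℓ`. -/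
theorem packed_edge_count {d : ℕ} (c ℓ : ℝ) (hℓ : 0 < ℓ)
    (l : List (Pt d)) (hpack : CPacked c l)
    (hedges : ∀ e ∈ edgesOf l, ℓ ≤ dist e.1 e.2)
    (q : Pt d) (R : ℝ) (hR : 0 < R) :
    (((Finset.range (edgesOf l).length).filter (fun i =>
          ∃ t ∈ Set.Icc (0:ℝ) 1,
            interpEdge ((edgesOf l).getD i (0, 0)) t ∈ Metric.closedBall q R)).card : ℝ)
      ≤ c * (R + ℓ) / ℓ := by
  simp only [CPacked, segBallLength_eq_segmentBallLength] at hpack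
  simp only [interpEdge_eq_lineMap]
  exact packed_edge_count_general hℓ (fun i hi ↦ hedges _ (getD_mem_of_mem_range hi _))
    ((sum_range_getD _ _ _).trans_le (hpack q (R + ℓ) (add_pos hR hℓ)))
end

section
/- Let K : [0,1] → ℝ^d be a continuous curve, let Q = q_1 q_2 … q_m be a polygonal curve in ℝ^d, and let r'', η ≥ 0. Suppose there exist parameters 0 = s_1 ≤ s_2 ≤ … ≤ s_m = 1 such that d_F(K|[s_i, s_{i+1}], seg(q_i, q_{i+1})) ≤ r'' for every 1 ≤ i ≤ m−1. Suppose further that t_1, …, t_m ∈ [0,1] satisfy: t_1 = 0, t_m = 1, t_i ≤ s_i ≤ t_{i+1} for all relevant indices, K is affine-linear on each interval [t_i, s_i], and ‖K(t_i) − K(s_i)‖ ≤ η for every i. Then d_F(K|[t_i, t_{i+1}], seg(q_i, q_{i+1})) ≤ r'' + η for every 1 ≤ i ≤ m−1. -/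
open scoped BigOperators

/-! To match `K|[t, t']` with `Q`, where `t ≤ s ≤ t' ≤ s'`, start from a nearly optimal matching of
`K|[s, s']` with `Q`. While `K` runs from `t` to `s`, wait at the start of `Q`; then follow the old
matching, except that `K` halts as soon as it reaches `t'`. At every moment the new and the old
position on `K` agree, or their parameters both lie in `[t, s]`, or both lie in `[t', s']`. They are
therefore at distance at most `η`, and the triangle inequality gives the bound. -/

section

open Set

namespace IsReparam

variable {α β : ℝ → ℝ}

lemma mapsTo (hα : IsReparam α) : MapsTo α (Icc 0 1) (Icc 0 1) := by
  simpa only [hα.map_zero, hα.map_one] using hα.monotoneOn.mapsTo_Icc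

protected lemma id : IsReparam id :=
  ⟨continuousOn_id, monotoneOn_id, rfl, rfl⟩

lemma comp (hα : IsReparam α) (hβ : IsReparam β) : IsReparam (α ∘ β) where
  continuousOn := hα.continuousOn.comp hβ.continuousOn hβ.mapsTo
  monotoneOn := hα.monotoneOn.comp hβ.monotoneOn hβ.mapsTo
  map_zero := by rw [Function.comp_apply, hβ.map_zero, hα.map_zero]
  map_one := by rw [Function.comp_apply, hβ.map_one, hα.map_one]

end IsReparam

lemma exists_isReparam_add_mul_sub_eq {p : ℝ → ℝ} (hcont : ContinuousOn p (Icc 0 1))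
    (hmono : MonotoneOn p (Icc 0 1)) :
    ∃ γ, IsReparam γ ∧ ∀ x ∈ Icc (0 : ℝ) 1, p 0 + γ x * (p 1 - p 0) = p x := by
  have hmaps : MapsTo p (Icc 0 1) (Icc (p 0) (p 1)) := hmono.mapsTo_Icc
  have hle : p 0 ≤ p 1 := (hmaps (left_mem_Icc.2 zero_le_one)).2
  rcases hle.eq_or_lt with heq | hlt
  · refine ⟨id, .id, fun x hx => ?_⟩
    rw [heq, sub_self, mul_zero, add_zero]
    exact le_antisymm (heq ▸ (hmaps hx).1) (hmaps hx).2
  · have hpos : 0 < p 1 - p 0 := sub_pos.2 hlt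
    refine ⟨fun x => (p x - p 0) / (p 1 - p 0), ⟨?_, ?_, ?_, ?_⟩, fun x _ => ?_⟩
    · exact (hcont.sub continuousOn_const).div_const _
    · intro x hx y hy hxy
      have hpxy : p x ≤ p y := hmono hx hy hxy
      dsimp only
      gcongr
    · simp only [sub_self, zero_div]
    · exact div_self hpos.ne'
    · rw [div_mul_cancel₀ _ hpos.ne', add_sub_cancel]

section Curves

variable {d : ℕ} {K P Q : ℝ → Pt d}

lemma continuous_seg (a b : Pt d) : Continuous (seg a b) := by
  unfold seg
  fun_prop

lemma continuousOn_subcurve {s s' : ℝ} (hss' : s ≤ s') (hK : ContinuousOn K (Icc s s')) :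
    ContinuousOn (subcurve K s s') (Icc 0 1) := by
  refine hK.comp (by fun_prop) fun u hu => ⟨?_, ?_⟩ <;> nlinarith [hu.1, hu.2]

lemma AffineOn.dist_le {a b x y : ℝ} (h : AffineOn K a b) (hx : x ∈ Icc a b) (hy : y ∈ Icc a b) :
    dist (K x) (K y) ≤ dist (K a) (K b) := by
  have hsub : K x - K y = ((x - y) / (b - a)) • (K b - K a) := by
    rw [h x hx, h y hy]
    module
  have hratio : ‖(x - y) / (b - a)‖ ≤ 1 := by
    have hab : 0 ≤ b - a := sub_nonneg.2 (hx.1.trans hx.2)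
    rw [norm_div, Real.norm_of_nonneg hab]
    exact div_le_one_of_le₀ (abs_sub_le_of_le_of_le hx.1 hx.2 hy.1 hy.2) hab
  rw [dist_comm (K a), dist_eq_norm, dist_eq_norm, hsub, norm_smul]
  exact mul_le_of_le_one_left (norm_nonneg _) hratio

lemma frechetDist_le {r : ℝ} {α β : ℝ → ℝ} (hα : IsReparam α) (hβ : IsReparam β)
    (h : ∀ x ∈ Icc (0 : ℝ) 1, dist (P (α x)) (Q (β x)) ≤ r) : frechetDist P Q ≤ r := by
  have hsup : ⨆ x : Icc (0 : ℝ) 1, dist (P (α x)) (Q (β x)) ≤ r := ciSup_le fun x => h x x.2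
  refine csInf_le_of_le ⟨0, ?_⟩ ⟨α, β, hα, hβ, rfl⟩ hsup
  rintro _ ⟨α', β', -, -, rfl⟩
  exact Real.iSup_nonneg fun _ => dist_nonneg

lemma exists_isReparam_dist_lt_of_frechetDist_lt (hP : ContinuousOn P (Icc 0 1))
    (hQ : ContinuousOn Q (Icc 0 1)) {r : ℝ} (h : frechetDist P Q < r) :
    ∃ α β, IsReparam α ∧ IsReparam β ∧
      ∀ x ∈ Icc (0 : ℝ) 1, dist (P (α x)) (Q (β x)) < r := by
  obtain ⟨_, ⟨α, β, hα, hβ, rfl⟩, hlt⟩ :=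
    exists_lt_of_csInf_lt (by exact ⟨_, id, id, .id, .id, rfl⟩) h
  have hcont : ContinuousOn (fun x => dist (P (α x)) (Q (β x))) (Icc 0 1) :=
    continuous_dist.comp_continuousOn
      ((hP.comp hα.continuousOn hα.mapsTo).prodMk (hQ.comp hβ.continuousOn hβ.mapsTo))
  have hbdd : BddAbove (range fun x : Icc (0 : ℝ) 1 => dist (P (α x)) (Q (β x))) := by
    simpa only [image_eq_range] using isCompact_Icc.bddAbove_image hcont
  exact ⟨α, β, hα, hβ, fun x hx => (le_ciSup hbdd ⟨x, hx⟩).trans_lt hlt⟩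

end Curves

/-- The reparametrization that waits at `0` on `[0, 1/2]` and then runs through `[0, 1]` at double
speed. -/
noncomputable def delay (x : ℝ) : ℝ := max 0 (2 * x - 1)

lemma delay_of_le_half {x : ℝ} (hx : x ≤ 1 / 2) : delay x = 0 :=
  max_eq_left (by linarith)

lemma isReparam_delay : IsReparam delay where
  continuousOn := by unfold delay; fun_prop
  monotoneOn := fun x _ y _ hxy => by unfold delay; gcongr
  map_zero := by norm_num [delay]
  map_one := by norm_num [delay]

/-- The parameter path from `t` to `t'` that sweeps `[t, s]` on `[0, 1/2]` and then follows the
path `x ↦ s + α x * (s' - s)` at double speed, stopping at `t'`. On `[0, 1/2]` the minimum is `s`,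
and on `[1/2, 1]` the subtracted term vanishes. -/
noncomputable def splicedPath (t s t' s' : ℝ) (α : ℝ → ℝ) (x : ℝ) : ℝ :=
  min (s + α (delay x) * (s' - s)) t' - max 0 (1 - 2 * x) * (s - t)

section SplicedPath

variable {t s t' s' : ℝ} {α : ℝ → ℝ}

lemma splicedPath_of_le_half (hα : IsReparam α) (hst' : s ≤ t') {x : ℝ} (hx : x ≤ 1 / 2) :
    splicedPath t s t' s' α x = s - (1 - 2 * x) * (s - t) := by
  rw [splicedPath, delay_of_le_half hx, hα.map_zero, zero_mul, add_zero, min_eq_left hst',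
    max_eq_right (by linarith)]

lemma splicedPath_of_half_le {x : ℝ} (hx : 1 / 2 ≤ x) :
    splicedPath t s t' s' α x = min (s + α (delay x) * (s' - s)) t' := by
  rw [splicedPath, max_eq_left (by linarith), zero_mul, sub_zero]

lemma splicedPath_zero (hα : IsReparam α) (hst' : s ≤ t') : splicedPath t s t' s' α 0 = t := by
  rw [splicedPath_of_le_half hα hst' (by norm_num)]
  ring

lemma splicedPath_one (hα : IsReparam α) (ht's' : t' ≤ s') : splicedPath t s t' s' α 1 = t' := by
  rw [splicedPath_of_half_le (by norm_num), isReparam_delay.map_one, hα.map_one, one_mul,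
    add_sub_cancel, min_eq_right ht's']

lemma continuousOn_splicedPath (hα : IsReparam α) :
    ContinuousOn (splicedPath t s t' s' α) (Icc 0 1) := by
  have hcomp : ContinuousOn (fun x => α (delay x)) (Icc 0 1) :=
    (hα.comp isReparam_delay).continuousOn
  have hmin : ContinuousOn (fun x => min (s + α (delay x) * (s' - s)) t') (Icc 0 1) :=
    (continuousOn_const.add (hcomp.mul continuousOn_const)).inf continuousOn_const
  exact hmin.sub (by fun_prop)

lemma monotoneOn_splicedPath (hα : IsReparam α) (hts : t ≤ s) (hss' : s ≤ s') :
    MonotoneOn (splicedPath t s t' s' α) (Icc 0 1) := by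
  intro x hx y hy hxy
  have hcomp : α (delay x) ≤ α (delay y) := (hα.comp isReparam_delay).monotoneOn hx hy hxy
  unfold splicedPath
  gcongr

lemma dist_splicedPath_le {E : Type*} [PseudoMetricSpace E] {K : ℝ → E} {η : ℝ}
    (hα : IsReparam α) (hts : t ≤ s) (hst' : s ≤ t') (ht's' : t' ≤ s')
    (hstart : ∀ x ∈ Icc t s, dist (K x) (K s) ≤ η)
    (hend : ∀ x ∈ Icc t' s', dist (K t') (K x) ≤ η) {x : ℝ} (hx : x ∈ Icc (0 : ℝ) 1) :
    dist (K (splicedPath t s t' s' α x)) (K (s + α (delay x) * (s' - s))) ≤ η := by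
  rcases le_total x (1 / 2) with hfirst | hsecond
  · rw [splicedPath_of_le_half hα hst' hfirst, delay_of_le_half hfirst, hα.map_zero, zero_mul,
      add_zero]
    exact hstart _ ⟨by nlinarith [hx.1], by nlinarith⟩
  rw [splicedPath_of_half_le hsecond]
  rcases le_total (s + α (delay x) * (s' - s)) t' with hbefore | hafter
  · rw [min_eq_left hbefore, dist_self]
    simpa only [dist_self] using hstart s (right_mem_Icc.2 hts)
  · rw [min_eq_right hafter]
    have hle_one : α (delay x) ≤ 1 := ((hα.comp isReparam_delay).mapsTo hx).2
    exact hend _ ⟨hafter, by nlinarith⟩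

lemma frechetDist_subcurve_le_add {d : ℕ} {K Q : ℝ → Pt d} {r η : ℝ}
    (hK : ContinuousOn K (Icc s s')) (hQ : ContinuousOn Q (Icc 0 1))
    (hts : t ≤ s) (hst' : s ≤ t') (ht's' : t' ≤ s')
    (hstart : ∀ x ∈ Icc t s, dist (K x) (K s) ≤ η)
    (hend : ∀ x ∈ Icc t' s', dist (K t') (K x) ≤ η)
    (hpiece : frechetDist (subcurve K s s') Q ≤ r) :
    frechetDist (subcurve K t t') Q ≤ r + η := by
  have hss' : s ≤ s' := hst'.trans ht's'
  refine le_of_forall_pos_le_add fun ε hε => ?_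
  obtain ⟨α, β, hα, hβ, hαβ⟩ := exists_isReparam_dist_lt_of_frechetDist_lt
    (continuousOn_subcurve hss' hK) hQ (hpiece.trans_lt (lt_add_of_pos_right r hε))
  obtain ⟨γ, hγ, hγ_eq⟩ := exists_isReparam_add_mul_sub_eq
    (continuousOn_splicedPath (t := t) (s := s) (t' := t') (s' := s') hα)
    (monotoneOn_splicedPath hα hts hss')
  rw [splicedPath_zero hα hst', splicedPath_one hα ht's'] at hγ_eq
  refine frechetDist_le hγ (hβ.comp isReparam_delay) fun x hx => ?_
  calc
    dist (subcurve K t t' (γ x)) (Q (β (delay x)))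
      ≤ dist (subcurve K t t' (γ x)) (subcurve K s s' (α (delay x)))
          + dist (subcurve K s s' (α (delay x))) (Q (β (delay x))) := dist_triangle _ _ _
    _ ≤ η + (r + ε) := by
      gcongr
      · rw [subcurve, hγ_eq x hx]
        exact dist_splicedPath_le hα hts hst' ht's' hstart hend hx
      · exact (hαβ _ (isReparam_delay.mapsTo hx)).le
    _ = r + η + ε := by ring

end SplicedPath

theorem frechet_pieces_perturb_general {d n : ℕ} {K : ℝ → Pt d} {Q : ℕ → ℝ → Pt d}
    {s t : ℕ → ℝ} {r η : ℝ} (hK : ContinuousOn K (Icc (s 0) (s n)))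
    (hQ : ∀ i < n, ContinuousOn (Q i) (Icc 0 1)) (hs : MonotoneOn s (Iic n))
    (hpieces : ∀ i < n, frechetDist (subcurve K (s i) (s (i + 1))) (Q i) ≤ r)
    (hts : ∀ i ≤ n, t i ≤ s i) (hst : ∀ i < n, s i ≤ t (i + 1))
    (hosc : ∀ i ≤ n, ∀ x ∈ Icc (t i) (s i), ∀ y ∈ Icc (t i) (s i), dist (K x) (K y) ≤ η) :
    ∀ i < n, frechetDist (subcurve K (t i) (t (i + 1))) (Q i) ≤ r + η := by
  intro i hi
  have hts_i : t i ≤ s i := hts i hi.le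
  have hts_succ : t (i + 1) ≤ s (i + 1) := hts (i + 1) hi
  have hsubset : Icc (s i) (s (i + 1)) ⊆ Icc (s 0) (s n) :=
    Icc_subset_Icc (hs n.zero_le hi.le i.zero_le) (hs hi self_mem_Iic hi)
  exact frechetDist_subcurve_le_add (hK.mono hsubset) (hQ i hi) hts_i (hst i hi) hts_succ
    (fun x hx => hosc i hi.le x hx _ (right_mem_Icc.2 hts_i))
    (hosc (i + 1) hi _ (left_mem_Icc.2 hts_succ)) (hpieces i hi)

end

/-- Let `K : [0,1] → ℝ^d` be continuous, `q_1 … q_m` vertices of a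
polygonal curve, `r'', η ≥ 0`. Suppose `0 = s_1 ≤ … ≤ s_m = 1` (here `0`-indexed) satisfy
`d_F(K|[s_i, s_{i+1}], seg(q_i, q_{i+1})) ≤ r''` for all `i`, and `t_1, …, t_m` satisfy
`t_1 = 0`, `t_m = 1`, `t_i ≤ s_i ≤ t_{i+1}`, `K` affine-linear on each `[t_i, s_i]`, and
`‖K(t_i) − K(s_i)‖ ≤ η`. Then `d_F(K|[t_i, t_{i+1}], seg(q_i, q_{i+1})) ≤ r'' + η` for all
`i`. -/
theorem frechet_pieces_perturb {d : ℕ} (m : ℕ) (hm : 2 ≤ m)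
    (K : ℝ → Pt d) (hK : ContinuousOn K (Set.Icc 0 1))
    (q : ℕ → Pt d) (r'' η : ℝ) (hr : 0 ≤ r'') (hη : 0 ≤ η)
    (s t : ℕ → ℝ)
    (hs0 : s 0 = 0) (hsm : s (m - 1) = 1)
    (hsmono : ∀ i j, i ≤ j → j ≤ m - 1 → s i ≤ s j)
    (hpieces : ∀ i, i + 1 < m →
      frechetDist (subcurve K (s i) (s (i + 1))) (seg (q i) (q (i + 1))) ≤ r'')
    (ht0 : t 0 = 0) (htm : t (m - 1) = 1)
    (hts : ∀ i, i ≤ m - 1 → t i ≤ s i)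
    (hst : ∀ i, i + 1 ≤ m - 1 → s i ≤ t (i + 1))
    (haff : ∀ i, i ≤ m - 1 → AffineOn K (t i) (s i))
    (hclose : ∀ i, i ≤ m - 1 → dist (K (t i)) (K (s i)) ≤ η) :
    ∀ i, i + 1 < m →
      frechetDist (subcurve K (t i) (t (i + 1))) (seg (q i) (q (i + 1))) ≤ r'' + η := by
  intro i hi
  exact frechet_pieces_perturb_general (n := m - 1) (by rwa [hs0, hsm])
    (fun i _ => (continuous_seg (q i) (q (i + 1))).continuousOn)
    (fun i _ j hj hij => hsmono i j hij hj) (fun i hi => hpieces i (by omega)) hts hst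
    (fun i hi _ hx _ hy => ((haff i hi).dist_le hx hy).trans (hclose i hi)) i (by omega)
end
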